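/- arXiv:1004.0078 — 9 statements merged into one kernel-verified Lean document; each statement's English description precedes it below -/
import Mathlib

section
/- Let n ≥ 2 and let f : ℂ² → ℂ be given by f(x,y) = x^{n-1} + x y² + y. If (x,y) ∈ ℂ² is a critical point of f, then x ≠ 0 and the critical value is f(x,y) = -(n/(n-1))·(1/(4x)). -/
/-!
At a critical point, `∂f/∂y = 0` reads `y = -1/(2x)`, so `x * y^2 = -y/2`, and `x * ∂f/∂x = 0`
then gives `(n-1) * x^(n-1) = -x * y^2 = y/2`. All three terms of `f` are thus multiples of `y`,
and adding them up yields `2 * (n-1) * f(x,y) = n * y`. Over a field of positive characteristic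
nothing changes: if `2` or `n - 1` vanishes in the field, then `f` has no critical point.
-/

namespace DnPerturbation

section CommRing

variable {R : Type*} [CommRing R] {n : ℕ} {x y : R}

theorem two_mul_sub_one_mul_value_of_critical (hn : 2 ≤ n)
    (hfx : (n - 1 : R) * x ^ (n - 2) + y ^ 2 = 0) (hfy : 2 * x * y + 1 = 0) :
    2 * (n - 1 : R) * (x ^ (n - 1) + x * y ^ 2 + y) = n * y := by
  have hpow : x ^ (n - 1) = x ^ (n - 2) * x := by rw [← pow_succ]; congr 1; omega
  have hxy : 2 * (x * y ^ 2) = -y := by linear_combination y * hfy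
  have hxn : 2 * (n - 1 : R) * x ^ (n - 1) = y := by
    rw [hpow]
    linear_combination 2 * x * hfx - hxy
  linear_combination hxn + (n - 1 : R) * hxy

theorem natCast_sub_one_ne_zero_of_critical [Nontrivial R] [IsReduced R]
    (hfx : (n - 1 : R) * x ^ (n - 2) + y ^ 2 = 0) (hfy : 2 * x * y + 1 = 0) :
    (n - 1 : R) ≠ 0 := by
  intro hn
  have hy : y = 0 := by simpa [hn] using hfx
  simp [hy] at hfy

theorem two_mul_ne_zero_of_critical [Nontrivial R] (hfy : 2 * x * y + 1 = 0) : 2 * x ≠ 0 := by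
  intro h2x
  simp [h2x] at hfy

end CommRing

theorem eq_neg_one_div_two_mul_of_critical {K : Type*} [Field K] {x y : K}
    (hfy : 2 * x * y + 1 = 0) : y = -1 / (2 * x) := by
  rw [eq_div_iff (two_mul_ne_zero_of_critical hfy)]
  linear_combination hfy

end DnPerturbation

open DnPerturbation in
theorem critical_values_of_Dn_perturbation_general {K : Type*} [Field K] {n : ℕ} (hn : 2 ≤ n)
    {x y : K} (hcrit : (n - 1 : K) * x ^ (n - 2) + y ^ 2 = 0 ∧ 2 * x * y + 1 = 0) :
    x ≠ 0 ∧ x ^ (n - 1) + x * y ^ 2 + y = -((n : K) / (n - 1 : K)) * (1 / (4 * x)) := by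
  obtain ⟨hfx, hfy⟩ := hcrit
  have hn1 : (n - 1 : K) ≠ 0 := natCast_sub_one_ne_zero_of_critical hfx hfy
  obtain ⟨h2, hx⟩ := mul_ne_zero_iff.mp (two_mul_ne_zero_of_critical hfy)
  refine ⟨hx, ?_⟩
  calc x ^ (n - 1) + x * y ^ 2 + y
      = n * y / (2 * (n - 1)) := by
        rw [eq_div_iff (mul_ne_zero h2 hn1), mul_comm]
        exact two_mul_sub_one_mul_value_of_critical hn hfx hfy
    _ = n * (-1 / (2 * x)) / (2 * (n - 1)) := by rw [← eq_neg_one_div_two_mul_of_critical hfy]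
    _ = -(n / (n - 1)) * (1 / (2 * 2 * x)) := by field_simp
    _ = -(n / (n - 1)) * (1 / (4 * x)) := by norm_num

/-- For `n ≥ 2` and `f(x,y) = x^(n-1) + x*y^2 + y` on `ℂ²`, if `(x,y)` is a critical
point of `f` (both partial derivatives `(n-1)x^(n-2) + y^2` and `2xy + 1` vanish),
then `x ≠ 0` and the critical value is `f(x,y) = -(n/(n-1)) * (1/(4x))`. -/
theorem critical_values_of_Dn_perturbation (n : ℕ) (hn : 2 ≤ n) (x y : ℂ)
    (hcrit : (n - 1 : ℂ) * x ^ (n - 2) + y ^ 2 = 0 ∧ 2 * x * y + 1 = 0) :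
    x ≠ 0 ∧ x ^ (n - 1) + x * y ^ 2 + y = -((n : ℂ) / (n - 1 : ℂ)) * (1 / (4 * x)) :=
  critical_values_of_Dn_perturbation_general hn hcrit
end

section
/- Let n ≥ 2 and let f : ℂ² → ℂ be given by f(x,y) = x^{n-1} + x y² + y. Then f has exactly n critical points, and f takes pairwise distinct values at these n critical points (so f has n distinct critical values). -/
/-!
At a critical point of `f` the equation `2xy = -1` gives `y = -(2x)⁻¹`, and substituting this into
the other one leaves `xⁿ = -(4(n - 1))⁻¹`, which has `n` distinct roots. Giving `x` and `y` the
weights `2` and `n - 2`, Euler's identity reads `2x f_x + (n - 2)y f_y = 2(n - 1)f - ny`, so a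
critical value determines `y`, and then `2xy = -1` determines `x`.
-/

theorem ncard_setOf_pow_eq {K : Type*} [Field K] [IsSepClosed K] {n : ℕ} (hn : (n : K) ≠ 0)
    {c : K} (hc : c ≠ 0) : {x : K | x ^ n = c}.ncard = n := by
  classical
  have hsep : (Polynomial.X ^ n - Polynomial.C c).Separable :=
    Polynomial.separable_X_pow_sub_C c hn hc
  have hpos : 0 < n := Nat.pos_of_ne_zero fun h => hn (by simp [h])
  have hset : {x : K | x ^ n = c} = (Polynomial.nthRoots n c).toFinset := by
    ext x
    simp [Polynomial.mem_nthRoots hpos]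
  rw [hset, Set.ncard_coe_finset, Polynomial.nthRoots,
    Multiset.toFinset_card_of_nodup (Polynomial.nodup_roots hsep),
    ← (IsSepClosed.splits_of_separable _ hsep).natDegree_eq_card_roots,
    Polynomial.natDegree_X_pow_sub_C]

/-- The perturbation `x ^ (n - 1) + x * y ^ 2 + y` of the `D_n` polynomial, as a function on the
affine plane over `R`. -/
def dnPerturbation {R : Type*} [CommRing R] (n : ℕ) (p : R × R) : R :=
  p.1 ^ (n - 1) + p.1 * p.2 ^ 2 + p.2

/-- The critical points of `dnPerturbation n`, encoded by the vanishing of its two formal partial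
derivatives. The exponent `n - 2` is a truncated subtraction, so this is meaningful for `2 ≤ n`. -/
def dnCriticalSet (R : Type*) [CommRing R] (n : ℕ) : Set (R × R) :=
  {p | (n - 1 : R) * p.1 ^ (n - 2) + p.2 ^ 2 = 0 ∧ 2 * p.1 * p.2 + 1 = 0}

section CommRing

variable {R : Type*} [CommRing R] {n : ℕ}

theorem two_mul_sub_one_mul_dnPerturbation (hn : 2 ≤ n) {p : R × R} (hp : p ∈ dnCriticalSet R n) :
    2 * (n - 1) * dnPerturbation n p = n * p.2 := by
  obtain ⟨hx, hy⟩ := hp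
  have hpow : p.1 ^ (n - 1) = p.1 * p.1 ^ (n - 2) := by
    rw [← pow_succ', show n - 2 + 1 = n - 1 by lia]
  rw [dnPerturbation, hpow]
  linear_combination 2 * p.1 * hx + (n - 2) * p.2 * hy

theorem injOn_snd_dnCriticalSet : Set.InjOn Prod.snd (dnCriticalSet R n) := by
  rintro ⟨x, y⟩ ⟨-, hx⟩ ⟨z, w⟩ ⟨-, hz⟩ (rfl : y = w)
  have hxz : x = z := by linear_combination x * hz - z * hx
  rw [hxz]

theorem injOn_dnPerturbation [NoZeroDivisors R] (hn : 2 ≤ n) (hnR : (n : R) ≠ 0) :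
    Set.InjOn (dnPerturbation n) (dnCriticalSet R n) := by
  intro p hp q hq hpq
  refine injOn_snd_dnCriticalSet hp hq (mul_left_cancel₀ hnR ?_)
  calc (n : R) * p.2 = 2 * (n - 1) * dnPerturbation n p :=
        (two_mul_sub_one_mul_dnPerturbation hn hp).symm
    _ = 2 * (n - 1) * dnPerturbation n q := by rw [hpq]
    _ = n * q.2 := two_mul_sub_one_mul_dnPerturbation hn hq

end CommRing

section Field

variable {K : Type*} [Field K] {n : ℕ}

theorem mem_dnCriticalSet_iff (hn : 2 ≤ n) {p : K × K} :
    p ∈ dnCriticalSet K n ↔ 4 * (n - 1) * p.1 ^ n = -1 ∧ p.2 = -(2 * p.1)⁻¹ := by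
  obtain ⟨x, y⟩ := p
  have hpow : x ^ n = x ^ (n - 2) * x ^ 2 := (pow_sub_mul_pow x hn).symm
  simp only [dnCriticalSet, Set.mem_ofPred_eq, hpow]
  constructor
  · rintro ⟨hx, hy⟩
    refine ⟨by linear_combination 4 * x ^ 2 * hx - (2 * x * y - 1) * hy, ?_⟩
    rw [← neg_eq_iff_eq_neg]
    exact eq_inv_of_mul_eq_one_right (by linear_combination -hy)
  · rintro ⟨hx, rfl⟩
    have hx0 : 2 * x ≠ 0 := fun h =>
      one_ne_zero (α := K) (by linear_combination hx - (n - 1) * x ^ (n - 2) * (2 * x) * h)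
    have hinv : 2 * x * (2 * x)⁻¹ = 1 := mul_inv_cancel₀ hx0
    refine ⟨mul_left_cancel₀ (pow_ne_zero 2 hx0) ?_, by linear_combination -hinv⟩
    linear_combination hx + (2 * x * (2 * x)⁻¹ + 1) * hinv

theorem dnCriticalSet_eq_image (hn : 2 ≤ n) (h4 : (4 * (n - 1) : K) ≠ 0) :
    dnCriticalSet K n =
      (fun x => (x, -(2 * x)⁻¹)) '' {x : K | x ^ n = -(4 * (n - 1) : K)⁻¹} := by
  ext ⟨x, y⟩
  have hroot : 4 * (n - 1) * x ^ n = -1 ↔ x ^ n = -(4 * (n - 1) : K)⁻¹ := by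
    rw [← mul_right_inj' (b := x ^ n) h4, mul_neg, mul_inv_cancel₀ h4]
  simp [mem_dnCriticalSet_iff hn, hroot, eq_comm]

theorem ncard_dnCriticalSet [IsSepClosed K] (hn : 2 ≤ n) (h2 : (2 : K) ≠ 0) (hnK : (n : K) ≠ 0)
    (hn1 : (n - 1 : K) ≠ 0) : (dnCriticalSet K n).ncard = n := by
  have h4 : (4 * (n - 1) : K) ≠ 0 := by
    rw [show (4 : K) = 2 * 2 by norm_num]
    exact mul_ne_zero (mul_ne_zero h2 h2) hn1
  have hinj : Function.Injective fun x : K => (x, -(2 * x)⁻¹) :=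
    Function.LeftInverse.injective (g := Prod.fst) fun _ => rfl
  rw [dnCriticalSet_eq_image hn h4, Set.ncard_image_of_injective _ hinj,
    ncard_setOf_pow_eq hnK (neg_ne_zero.2 (inv_ne_zero h4))]

theorem Dn_perturbation_has_n_distinct_critical_values_general [IsSepClosed K]
    (h2 : (2 : K) ≠ 0) (hnK : (n : K) ≠ 0) (hn1 : (n - 1 : K) ≠ 0) :
    (dnCriticalSet K n).ncard = n ∧ Set.InjOn (dnPerturbation n) (dnCriticalSet K n) := by
  have hn : 2 ≤ n :=
    (Nat.two_le_iff n).2 ⟨fun h => hnK (by simp [h]), fun h => hn1 (by simp [h])⟩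
  exact ⟨ncard_dnCriticalSet hn h2 hnK hn1, injOn_dnPerturbation hn hnK⟩

end Field

/-- For `n ≥ 2` and `f(x,y) = x^(n-1) + x*y^2 + y` on `ℂ²`, the set of critical
points of `f` (points where both partial derivatives `(n-1)x^(n-2) + y^2` and
`2xy + 1` vanish) has exactly `n` elements, and `f` takes pairwise distinct values
at these critical points, i.e. `f` is injective on the critical set. -/
theorem Dn_perturbation_has_n_distinct_critical_values (n : ℕ) (hn : 2 ≤ n) :
    ({p : ℂ × ℂ | (n - 1 : ℂ) * p.1 ^ (n - 2) + p.2 ^ 2 = 0 ∧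
        2 * p.1 * p.2 + 1 = 0}).ncard = n ∧
    Set.InjOn (fun p : ℂ × ℂ => p.1 ^ (n - 1) + p.1 * p.2 ^ 2 + p.2)
      {p : ℂ × ℂ | (n - 1 : ℂ) * p.1 ^ (n - 2) + p.2 ^ 2 = 0 ∧
        2 * p.1 * p.2 + 1 = 0} :=
  Dn_perturbation_has_n_distinct_critical_values_general two_ne_zero
    (Nat.cast_ne_zero.2 (by lia)) (sub_ne_zero.2 (Nat.cast_ne_one.2 (by lia)))
end

section
/- Let n ≥ 2 and let R = ℂ[x,y]/(x^{n-1}y + y²). Then the annihilator of y in R is the principal ideal generated by x^{n-1} + y, and the annihilator of x^{n-1} + y in R is the principal ideal generated by y. Equivalently, the 2-periodic sequence ⋯ → R →^{x^{n-1}+y} R →^{y} R → R/(y) → 0 is exact. -/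
open MvPolynomial

/-! In `A ⧸ (ab)` with `a` a nonzerodivisor, `a * p ∈ (ab)` lets one cancel `a`, so the annihilator
of `a` is `(b)`; if `b` is a nonzerodivisor too, the roles may be exchanged. Here `W = y (p + y)`
with `p = x^(n-1)` free of `y`, and the substitution `y ↦ y - p` is an automorphism of the
polynomial ring carrying `y + p` to the variable `y`, which is a nonzerodivisor over every
coefficient ring. -/

theorem quotient_mk_mul_eq_zero_iff_mem_span_singleton {A : Type*} [CommRing A] {a b w : A}
    (ha : a ∈ nonZeroDivisors A) (hw : w = a * b) (r : A ⧸ Ideal.span {w}) :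
    Ideal.Quotient.mk (Ideal.span {w}) a * r = 0 ↔
      r ∈ Ideal.span {Ideal.Quotient.mk (Ideal.span {w}) b} := by
  obtain ⟨p, rfl⟩ := Ideal.Quotient.mk_surjective r
  have span_le : Ideal.span {w} ≤ Ideal.span {b} :=
    Ideal.span_singleton_le_span_singleton.mpr (hw ▸ dvd_mul_left b a)
  calc Ideal.Quotient.mk (Ideal.span {w}) a * Ideal.Quotient.mk _ p = 0
    _ ↔ a * b ∣ a * p := by
      rw [← map_mul, Ideal.Quotient.eq_zero_iff_dvd, hw]
    _ ↔ b ∣ p := dvd_cancel_left_mem_nonZeroDivisors ha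
    _ ↔ p ∈ Ideal.span {b} := Ideal.mem_span_singleton.symm
    _ ↔ Ideal.Quotient.mk (Ideal.span {w}) p ∈ Ideal.span {Ideal.Quotient.mk _ b} := by
      rw [← Ideal.mem_quotient_iff_mem span_le, Ideal.map_span, Set.image_singleton]

section CommSemiring

variable {σ k : Type*} [DecidableEq σ] [CommSemiring k]

/-- The shear `X j ↦ X j + p` of affine space, as a substitution fixing the other variables.
It is an automorphism over a commutative ring when `X j` does not occur in `p`. -/
noncomputable def shear (j : σ) (p : MvPolynomial σ k) :
    MvPolynomial σ k →ₐ[k] MvPolynomial σ k :=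
  bind₁ (Function.update X j (X j + p))

theorem shear_X_self (j : σ) (p : MvPolynomial σ k) : shear j p (X j) = X j + p := by
  simp [shear]

theorem shear_X_of_ne {i j : σ} (hij : i ≠ j) (p : MvPolynomial σ k) :
    shear j p (X i) = X i := by
  simp [shear, hij]

theorem shear_zero (j : σ) : shear j (0 : MvPolynomial σ k) = AlgHom.id k _ := by
  simp [shear]

theorem shear_apply_of_notMem_vars {j : σ} {q : MvPolynomial σ k} (hq : j ∉ q.vars)
    (p : MvPolynomial σ k) : shear j p q = q := by
  have agree_on_vars : shear j p q = bind₁ X q :=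
    eval₂Hom_congr' rfl
      (fun _ hi _ ↦ Function.update_of_ne (ne_of_mem_of_not_mem hi hq) _ X) rfl
  rw [agree_on_vars, bind₁_X_left, AlgHom.id_apply]

theorem shear_comp_shear {j : σ} {p : MvPolynomial σ k} (hp : j ∉ p.vars)
    (q : MvPolynomial σ k) : (shear j q).comp (shear j p) = shear j (q + p) := by
  ext1 i
  rw [AlgHom.comp_apply]
  obtain rfl | hij := eq_or_ne i j
  · rw [shear_X_self, map_add, shear_X_self, shear_apply_of_notMem_vars hp, shear_X_self,
      add_assoc]
  · simp only [shear_X_of_ne hij]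

end CommSemiring

section CommRing

variable {σ k : Type*} [CommRing k] {j : σ} {p : MvPolynomial σ k}

theorem shear_injective [DecidableEq σ] (hp : j ∉ p.vars) : Function.Injective (shear j p) := by
  have leftInverse : Function.LeftInverse (shear j (-p)) (shear j p) := fun q ↦ by
    rw [← AlgHom.comp_apply, shear_comp_shear hp, neg_add_cancel, shear_zero, AlgHom.id_apply]
  exact leftInverse.injective

theorem X_add_mem_nonZeroDivisors (hp : j ∉ p.vars) :
    X j + p ∈ nonZeroDivisors (MvPolynomial σ k) := by
  classical
  have hp_neg : j ∉ (-p).vars := by rwa [vars_neg]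
  have shear_X_add : shear j (-p) (X j + p) = X j := by
    rw [map_add, shear_X_self, shear_apply_of_notMem_vars hp, neg_add_cancel_right]
  apply mem_nonZeroDivisors_of_injective (shear_injective hp_neg)
  rw [shear_X_add]
  exact isRegular_X.mem_nonZeroDivisors

end CommRing

theorem two_periodic_resolution_Dn_transpose_general {σ k : Type*} [CommRing k] {j : σ}
    {p : MvPolynomial σ k} (hp : j ∉ p.vars) :
    let W : MvPolynomial σ k := p * X j + X j ^ 2
    let R := MvPolynomial σ k ⧸ Ideal.span {W}
    let z : R := Ideal.Quotient.mk _ p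
    let y : R := Ideal.Quotient.mk _ (X j)
    (∀ r : R, y * r = 0 ↔ r ∈ Ideal.span {z + y}) ∧
    (∀ r : R, (z + y) * r = 0 ↔ r ∈ Ideal.span {y}) := by
  intro W R z y
  have X_regular : X j ∈ nonZeroDivisors (MvPolynomial σ k) := isRegular_X.mem_nonZeroDivisors
  have add_X_regular : p + X j ∈ nonZeroDivisors (MvPolynomial σ k) :=
    add_comm p (X j) ▸ X_add_mem_nonZeroDivisors hp
  exact ⟨quotient_mk_mul_eq_zero_iff_mem_span_singleton X_regular (by ring),
    quotient_mk_mul_eq_zero_iff_mem_span_singleton add_X_regular (by ring)⟩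

/-- For `n ≥ 2` and `R = ℂ[x,y]/(x^(n-1) y + y²)`, the annihilator of `y` in `R` is
the principal ideal generated by `x^(n-1) + y`, and the annihilator of `x^(n-1) + y`
is the principal ideal generated by `y`; i.e. the 2-periodic sequence
`⋯ → R → R → R → R/(y) → 0` with maps alternating multiplication by `x^(n-1)+y`
and by `y` is exact. -/
theorem two_periodic_resolution_Dn_transpose (n : ℕ) (hn : 2 ≤ n) :
    let W : MvPolynomial (Fin 2) ℂ := X 0 ^ (n - 1) * X 1 + X 1 ^ 2
    let R := MvPolynomial (Fin 2) ℂ ⧸ Ideal.span {W}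
    let x : R := Ideal.Quotient.mk _ (X 0)
    let y : R := Ideal.Quotient.mk _ (X 1)
    (∀ r : R, y * r = 0 ↔ r ∈ Ideal.span {x ^ (n - 1) + y}) ∧
    (∀ r : R, (x ^ (n - 1) + y) * r = 0 ↔ r ∈ Ideal.span {y}) := by
  have y_notMem_vars : (1 : Fin 2) ∉ (X 0 ^ (n - 1) : MvPolynomial (Fin 2) ℂ).vars :=
    fun h ↦ by simpa using vars_pow _ _ h
  exact two_periodic_resolution_Dn_transpose_general y_notMem_vars
end

section
/- Let n ≥ 2 and let R = ℂ[x,y]/(x^{n-1}y + y²). Let M̄ : R² → R² be the R-linear map given by the matrix [[-y, x^{n-2}y], [x, y]] (entries reduced mod W), and let ε : R² → R be the map (r,s) ↦ x·r + y·s. Then ker ε = range M̄ and ker M̄ = range M̄. Equivalently, the 2-periodic sequence ⋯ → R² →^{M̄} R² →^{M̄} R² →^{ε} R → R/(x,y) → 0 is exact, giving a free resolution of the residue field R/(x,y). -/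
open MvPolynomial

/-!
A relation `a r + b s ∈ (W)` with `W = a f + b g` can be corrected by a multiple of `(f, g)` to a
relation `a r + b s = 0`, which for a weakly regular pair is a multiple of the Koszul relation
`(-b, a)`. Hence the kernel of the row `(a, b)` modulo `W` is spanned by the columns of
`M = [[-b, f], [a, g]]`. Moreover `N * M = W` for `N = [[-g, f], [a, b]]`, whose second row is
`(a, b)`, so modulo `W` the inclusions `range M ≤ ker N ≤ ker (a, b) ≤ range M` are all equalities.
In type `D_n` transpose, `f = x ^ (n - 2) * y` and `b = g = y`, so that `N = M`.
-/

open RingTheory.Sequence (IsWeaklyRegular)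

section RegularPair

variable {A : Type*} [CommRing A] {a b : A}

theorem isWeaklyRegular_pair_iff :
    IsWeaklyRegular A [a, b] ↔ IsSMulRegular A a ∧ ∀ q, a ∣ b * q → a ∣ q := by
  have mk_eq_zero_iff (q : A) :
      (Submodule.Quotient.mk q : QuotSMulTop a A) = 0 ↔ a ∣ q := by
    rw [Submodule.Quotient.mk_eq_zero, Submodule.mem_smul_pointwise_iff_exists]
    simp only [Submodule.mem_top, true_and, smul_eq_mul, dvd_def, eq_comm]
  simp only [RingTheory.Sequence.isWeaklyRegular_cons_iff, IsWeaklyRegular.nil, and_true,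
    isSMulRegular_iff_right_eq_zero_of_smul (M := QuotSMulTop a A),
    (Submodule.Quotient.mk_surjective _).forall, ← Submodule.Quotient.mk_smul, mk_eq_zero_iff,
    smul_eq_mul]

theorem isWeaklyRegular_pair_of_prime [IsCancelMulZero A] (ha : Prime a) (hab : ¬a ∣ b) :
    IsWeaklyRegular A [a, b] :=
  isWeaklyRegular_pair_iff.mpr
    ⟨.of_ne_zero ha.ne_zero, fun _ h => (ha.dvd_or_dvd h).resolve_left hab⟩

theorem isWeaklyRegular_X_pair {σ k : Type*} [CommRing k] [IsDomain k] {i j : σ} (hij : i ≠ j) :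
    IsWeaklyRegular (MvPolynomial σ k) [(X i : MvPolynomial σ k), X j] :=
  isWeaklyRegular_pair_of_prime X_prime (X_dvd_X.not.mpr hij)

theorem exists_eq_koszul_relation (hab : IsWeaklyRegular A [a, b]) {p q : A}
    (h : a * p + b * q = 0) : ∃ c, p = -b * c ∧ q = a * c := by
  obtain ⟨ha, hb⟩ := isWeaklyRegular_pair_iff.mp hab
  obtain ⟨c, rfl⟩ : a ∣ q := hb q ⟨-p, by linear_combination h⟩
  exact ⟨c, ha (by simp only [smul_eq_mul]; linear_combination h), rfl⟩

end RegularPair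

section MatrixFactorization

variable {R : Type*} [CommRing R]

/-- The last differential `(r, s) ↦ x r + y s` of the Koszul complex on `x, y`, which augments the
resolution of `R ⧸ (x, y)`. -/
def koszulAugmentation (x y : R) : (Fin 2 → R) →ₗ[R] R :=
  x • LinearMap.proj 0 + y • LinearMap.proj 1

theorem koszulAugmentation_apply (x y : R) (v : Fin 2 → R) :
    koszulAugmentation x y v = x * v 0 + y * v 1 :=
  rfl

theorem mem_range_koszulAugmentation {x y r : R} :
    r ∈ LinearMap.range (koszulAugmentation x y) ↔ r ∈ Ideal.span {x, y} := by
  simp only [LinearMap.mem_range, koszulAugmentation_apply, Ideal.mem_span_pair,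
    (finTwoArrowEquiv R).symm.surjective.exists, Prod.exists, finTwoArrowEquiv_symm_apply,
    Matrix.cons_val_zero, Matrix.cons_val_one, mul_comm]

theorem mulVecLin_fin_two_apply (p q r s : R) (v : Fin 2 → R) :
    Matrix.mulVecLin !![p, q; r, s] v = ![p * v 0 + q * v 1, r * v 0 + s * v 1] := by
  simp only [Matrix.mulVecLin_apply, Matrix.cons_mulVec, Matrix.empty_mulVec,
    Matrix.vec2_dotProduct, Matrix.cons_val_zero, Matrix.cons_val_one]

theorem ker_mulVecLin_le_ker_koszulAugmentation (p q x y : R) :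
    LinearMap.ker (Matrix.mulVecLin !![p, q; x, y]) ≤ LinearMap.ker (koszulAugmentation x y) := by
  intro v hv
  rw [LinearMap.mem_ker, mulVecLin_fin_two_apply] at hv
  exact congrFun hv 1

theorem matrixFactorization_mul (a b f g : R) :
    !![-g, f; a, b] * !![-b, f; a, g] = (a * f + b * g) • (1 : Matrix (Fin 2) (Fin 2) R) := by
  simp only [Matrix.mul_fin_two, Matrix.one_fin_two, Matrix.smul_of, Matrix.smul_cons,
    Matrix.smul_empty, smul_eq_mul]
  ring_nf

theorem range_mulVecLin_le_ker_mulVecLin {a b f g : R} (hW : a * f + b * g = 0) :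
    LinearMap.range (Matrix.mulVecLin !![-b, f; a, g]) ≤
      LinearMap.ker (Matrix.mulVecLin !![-g, f; a, b]) := by
  rw [LinearMap.range_le_ker_iff, ← Matrix.mulVecLin_mul, matrixFactorization_mul, hW, zero_smul,
    Matrix.mulVecLin_zero]

end MatrixFactorization

section Hypersurface

variable {A R : Type*} [CommRing A] [CommRing R] {φ : A →+* R} {a b f g : A}

theorem ker_koszulAugmentation_le_range_mulVecLin (hφ : Function.Surjective φ)
    (hker : RingHom.ker φ = Ideal.span {a * f + b * g}) (hab : IsWeaklyRegular A [a, b]) :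
    LinearMap.ker (koszulAugmentation (φ a) (φ b)) ≤
      LinearMap.range (Matrix.mulVecLin !![-φ b, φ f; φ a, φ g]) := by
  intro v hv
  obtain ⟨r, hr⟩ := hφ (v 0)
  obtain ⟨s, hs⟩ := hφ (v 1)
  have relation_mem : a * r + b * s ∈ Ideal.span {a * f + b * g} := by
    rw [← hker, RingHom.mem_ker, map_add, map_mul, map_mul, hr, hs]
    exact hv
  obtain ⟨c, hc⟩ := Ideal.mem_span_singleton.mp relation_mem
  obtain ⟨d, hd₀, hd₁⟩ := exists_eq_koszul_relation hab (p := r - f * c) (q := s - g * c)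
    (by linear_combination hc)
  refine ⟨![φ d, φ c], ?_⟩
  rw [mulVecLin_fin_two_apply]
  ext i
  fin_cases i
  · simp [← hr, sub_eq_iff_eq_add.mp hd₀]
  · simp [← hs, sub_eq_iff_eq_add.mp hd₁]

theorem two_periodic_resolution_residue_field_Dn_transpose_general
    (hφ : Function.Surjective φ) (hker : RingHom.ker φ = Ideal.span {a * f + b ^ 2})
    (hab : IsWeaklyRegular A [a, b]) :
    let M := Matrix.mulVecLin !![-φ b, φ f; φ a, φ b]
    let ε := koszulAugmentation (φ a) (φ b)
    LinearMap.ker ε = LinearMap.range M ∧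
    LinearMap.ker M = LinearMap.range M ∧
    ∀ r : R, r ∈ LinearMap.range ε ↔ r ∈ Ideal.span {φ a, φ b} := by
  intro M ε
  rw [pow_two] at hker
  have hW : φ a * φ f + φ b * φ b = 0 := by
    rw [← map_mul, ← map_mul, ← map_add, ← RingHom.mem_ker, hker]
    exact Ideal.mem_span_singleton_self _
  have range_le_ker : LinearMap.range M ≤ LinearMap.ker M := range_mulVecLin_le_ker_mulVecLin hW
  have ker_le_ker : LinearMap.ker M ≤ LinearMap.ker ε :=
    ker_mulVecLin_le_ker_koszulAugmentation _ _ _ _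
  have ker_le_range : LinearMap.ker ε ≤ LinearMap.range M :=
    ker_koszulAugmentation_le_range_mulVecLin hφ hker hab
  exact ⟨ker_le_range.antisymm (range_le_ker.trans ker_le_ker),
    (ker_le_ker.trans ker_le_range).antisymm range_le_ker, fun _ => mem_range_koszulAugmentation⟩

end Hypersurface

/-- For `n ≥ 2` and `R = ℂ[x,y]/(x^(n-1) y + y²)`, let `M̄ : R² → R²` be given by the
matrix `[[-y, x^(n-2) y], [x, y]]` and `ε : R² → R` by `(r,s) ↦ x r + y s`.  Then
`ker ε = range M̄` and `ker M̄ = range M̄`; moreover `range ε = (x,y)`, so the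
2-periodic sequence `⋯ → R² → R² → R² → R → R/(x,y) → 0` is exact, giving a free
resolution of the residue field. -/
theorem two_periodic_resolution_residue_field_Dn_transpose (n : ℕ) (hn : 2 ≤ n) :
    let W : MvPolynomial (Fin 2) ℂ := X 0 ^ (n - 1) * X 1 + X 1 ^ 2
    let R := MvPolynomial (Fin 2) ℂ ⧸ Ideal.span {W}
    let x : R := Ideal.Quotient.mk _ (X 0)
    let y : R := Ideal.Quotient.mk _ (X 1)
    let Mbar : (Fin 2 → R) →ₗ[R] (Fin 2 → R) :=
      Matrix.mulVecLin !![-y, x ^ (n - 2) * y; x, y]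
    let ε : (Fin 2 → R) →ₗ[R] R :=
      x • LinearMap.proj 0 + y • LinearMap.proj 1
    LinearMap.ker ε = LinearMap.range Mbar ∧
    LinearMap.ker Mbar = LinearMap.range Mbar ∧
    (∀ r : R, r ∈ LinearMap.range ε ↔ r ∈ Ideal.span {x, y}) := by
  have hW : X 0 ^ (n - 1) * X 1 + X 1 ^ 2 =
      (X 0 * (X 0 ^ (n - 2) * X 1) + X 1 ^ 2 : MvPolynomial (Fin 2) ℂ) := by
    rw [← mul_assoc, ← pow_succ', show n - 2 + 1 = n - 1 by omega]
  exact two_periodic_resolution_residue_field_Dn_transpose_general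
    (f := X 0 ^ (n - 2) * X 1) Ideal.Quotient.mk_surjective (by rw [Ideal.mk_ker, hW])
    (isWeaklyRegular_X_pair zero_ne_one)
end

section
/- Let n ≥ 2 and let R = ℂ[x,y]/(x^{n-1}y + y²). Then multiplication by x is injective on R (x is a nonzerodivisor), and the quotient R/(x) is isomorphic as a ℂ-algebra to ℂ[Y]/(Y²). In particular the sequence 0 → R →^{x} R → R/(x, y²) → 0 is exact. -/
open MvPolynomial

/-!
If `a` is a nonzerodivisor on `A` and `w` is one on `A/(a)`, then `a` remains a nonzerodivisor on
`A/(w)`: from `a f = w g`, reducing modulo `a` forces `a ∣ g`, and cancelling `a` gives `w ∣ f`.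
Moreover `A/(w)/(a)` and `A/(a)/(w)` agree. Both apply to `a = x` and any polynomial `w = W(x, y)`
for which `W(0, Y)` is a nonzerodivisor; here `W(0, Y) = Y²`.
-/

section QuotientByKernel

variable {A B : Type*} [CommRing A] [CommRing B]

theorem isLeftRegular_quotient_mk_of_ker_eq_span {φ : A →+* B} {a w : A}
    (hker : RingHom.ker φ = Ideal.span {a}) (ha : IsLeftRegular a) (hw : IsLeftRegular (φ w)) :
    IsLeftRegular (Ideal.Quotient.mk (Ideal.span {w}) a) := by
  have map_a : φ a = 0 := by
    rw [← RingHom.mem_ker, hker]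
    exact Ideal.mem_span_singleton_self a
  rw [isLeftRegular_iff_right_eq_zero_of_mul]
  intro r hr
  obtain ⟨f, rfl⟩ := Ideal.Quotient.mk_surjective r
  rw [← map_mul, Ideal.Quotient.eq_zero_iff_dvd] at hr
  rw [Ideal.Quotient.eq_zero_iff_dvd]
  obtain ⟨g, hfg⟩ := hr
  have map_g : φ g = 0 :=
    hw.mul_left_eq_zero_iff.1 <| by rw [← map_mul, ← hfg, map_mul, map_a, zero_mul]
  obtain ⟨h, rfl⟩ : a ∣ g := by
    rwa [← Ideal.mem_span_singleton, ← hker, RingHom.mem_ker]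
  exact ⟨h, ha (hfg.trans (mul_left_comm w a h))⟩

/-- The exchange isomorphism `(A/I)/(ker φ) ≃ B/(φ I)` for a surjection `φ : A → B`. It
computes `(A/(w))/(a)` as a quotient of `B` when `ker φ = (a)`. -/
noncomputable def quotientQuotientKerAlgEquiv {k : Type*} [CommSemiring k] [Algebra k A]
    [Algebra k B] {φ : A →ₐ[k] B} (hφ : Function.Surjective φ) (I : Ideal A) :
    ((A ⧸ I) ⧸ (RingHom.ker φ).map (Ideal.Quotient.mkₐ k I)) ≃ₐ[k] B ⧸ I.map φ :=
  (DoubleQuot.quotQuotEquivCommₐ k I (RingHom.ker φ)).trans <|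
    Ideal.quotientEquivAlg _ _ (Ideal.quotientKerAlgEquivOfSurjective hφ) <| by
      rw [← Ideal.map_coe (Ideal.Quotient.mkₐ k _), Ideal.map_map]
      exact (Ideal.map_coe φ I).symm

theorem nonempty_quotient_span_quotient_span_algEquiv {k : Type*} [CommSemiring k] [Algebra k A]
    [Algebra k B] {φ : A →ₐ[k] B} (hφ : Function.Surjective φ) {a : A}
    (hker : RingHom.ker φ = Ideal.span {a}) (w : A) :
    Nonempty (((A ⧸ Ideal.span {w}) ⧸ Ideal.span {Ideal.Quotient.mk (Ideal.span {w}) a}) ≃ₐ[k]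
      B ⧸ Ideal.span {φ w}) := by
  have e := quotientQuotientKerAlgEquiv hφ (Ideal.span {w})
  rw [hker, Ideal.map_span, Ideal.map_span, Set.image_singleton, Set.image_singleton] at e
  exact ⟨e⟩

end QuotientByKernel

section RestrictToYAxis

variable {k : Type*} [CommRing k]

/-- Restriction of polynomial functions on the plane to the line `x = 0`, i.e. `f(x, y) ↦ f(0, Y)`,
where `x` and `y` are `X 0` and `X 1`. Its kernel is `(x)`, so it models the quotient by `x`. -/
noncomputable def restrictToYAxis : MvPolynomial (Fin 2) k →ₐ[k] Polynomial k :=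
  aeval ![0, Polynomial.X]

@[simp]
theorem restrictToYAxis_X_zero : restrictToYAxis (X 0 : MvPolynomial (Fin 2) k) = 0 := by
  simp [restrictToYAxis]

@[simp]
theorem restrictToYAxis_X_one :
    restrictToYAxis (X 1 : MvPolynomial (Fin 2) k) = Polynomial.X := by
  simp [restrictToYAxis]

theorem restrictToYAxis_surjective :
    Function.Surjective (restrictToYAxis : MvPolynomial (Fin 2) k →ₐ[k] Polynomial k) := fun p =>
  ⟨Polynomial.aeval (X 1) p, by
    rw [← Polynomial.aeval_algHom_apply, restrictToYAxis_X_one, Polynomial.aeval_X_left_apply]⟩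

theorem X_zero_dvd_sub_aeval_restrictToYAxis (f : MvPolynomial (Fin 2) k) :
    X 0 ∣ f - Polynomial.aeval (X 1) (restrictToYAxis f) := by
  let q := Ideal.Quotient.mkₐ k (Ideal.span {(X 0 : MvPolynomial (Fin 2) k)})
  have q_X_zero : q (X 0) = 0 :=
    Ideal.Quotient.eq_zero_iff_mem.2 (Ideal.mem_span_singleton_self _)
  have q_eq : q = q.comp ((Polynomial.aeval (X 1)).comp restrictToYAxis) := by
    ext i
    fin_cases i <;> simp [q_X_zero]
  rw [← Ideal.mem_span_singleton, ← Ideal.Quotient.mk_eq_mk_iff_sub_mem]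
  exact DFunLike.congr_fun q_eq f

theorem ker_restrictToYAxis :
    RingHom.ker (restrictToYAxis : MvPolynomial (Fin 2) k →ₐ[k] Polynomial k) =
      Ideal.span {X 0} := by
  refine le_antisymm (fun f hf => ?_) ?_
  · have hdvd := X_zero_dvd_sub_aeval_restrictToYAxis f
    rwa [RingHom.mem_ker.1 hf, map_zero, sub_zero, ← Ideal.mem_span_singleton] at hdvd
  · rw [Ideal.span_singleton_le_iff_mem]
    exact restrictToYAxis_X_zero

theorem mk_X_zero_dvd_aeval_restrictToYAxis (W : MvPolynomial (Fin 2) k) :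
    Ideal.Quotient.mk (Ideal.span {W}) (X 0) ∣
      Polynomial.aeval (Ideal.Quotient.mk (Ideal.span {W}) (X 1)) (restrictToYAxis W) := by
  let q := Ideal.Quotient.mkₐ k (Ideal.span {W})
  have q_W : q W = 0 := Ideal.Quotient.eq_zero_iff_mem.2 (Ideal.mem_span_singleton_self W)
  have hdvd := map_dvd q (X_zero_dvd_sub_aeval_restrictToYAxis W)
  rw [map_sub, q_W, zero_sub, ← Polynomial.aeval_algHom_apply] at hdvd
  exact dvd_neg.1 hdvd

end RestrictToYAxis

theorem x_regular_on_Dn_transpose_ring_general {k : Type*} [CommRing k]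
    {W : MvPolynomial (Fin 2) k} {p : Polynomial k} (hW : restrictToYAxis W = p)
    (hp : IsLeftRegular p) :
    let R := MvPolynomial (Fin 2) k ⧸ Ideal.span {W}
    let x : R := Ideal.Quotient.mk _ (X 0)
    let y : R := Ideal.Quotient.mk _ (X 1)
    Function.Injective (fun r : R => x * r) ∧
    Nonempty ((R ⧸ Ideal.span {x}) ≃ₐ[k] (Polynomial k ⧸ Ideal.span {p})) ∧
    Ideal.span {x} = Ideal.span {x, Polynomial.aeval y p} := by
  subst hW
  exact ⟨isLeftRegular_quotient_mk_of_ker_eq_span ker_restrictToYAxis isRegular_X.left hp,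
    nonempty_quotient_span_quotient_span_algEquiv restrictToYAxis_surjective
      ker_restrictToYAxis W,
    (Ideal.span_pair_eq_span_left_iff_dvd.2 (mk_X_zero_dvd_aeval_restrictToYAxis W)).symm⟩

/-- For `n ≥ 2` and `R = ℂ[x,y]/(x^(n-1) y + y²)`, multiplication by `x` is
injective on `R`, the quotient `R/(x)` is isomorphic as a `ℂ`-algebra to
`ℂ[Y]/(Y²)`, and the ideals `(x)` and `(x, y²)` of `R` coincide; in particular the
sequence `0 → R → R → R/(x, y²) → 0` (first map multiplication by `x`) is exact. -/
theorem x_regular_on_Dn_transpose_ring (n : ℕ) (hn : 2 ≤ n) :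
    let W : MvPolynomial (Fin 2) ℂ := X 0 ^ (n - 1) * X 1 + X 1 ^ 2
    let R := MvPolynomial (Fin 2) ℂ ⧸ Ideal.span {W}
    let x : R := Ideal.Quotient.mk _ (X 0)
    let y : R := Ideal.Quotient.mk _ (X 1)
    Function.Injective (fun r : R => x * r) ∧
    Nonempty ((R ⧸ Ideal.span {x}) ≃ₐ[ℂ]
      (Polynomial ℂ ⧸ Ideal.span {(Polynomial.X : Polynomial ℂ) ^ 2})) ∧
    Ideal.span {x} = Ideal.span {x, y ^ 2} := by
  have hW : restrictToYAxis (X 0 ^ (n - 1) * X 1 + X 1 ^ 2 : MvPolynomial (Fin 2) ℂ) =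
      Polynomial.X ^ 2 := by
    simp [show n - 1 ≠ 0 by lia]
  simpa only [map_pow, Polynomial.aeval_X] using
    x_regular_on_Dn_transpose_ring_general hW (Polynomial.isRegular_X_pow 2).left
end

section
/- Let n ≥ 2 and let R = ℂ[x,y]/(x^{n-1}y + y²). In R, the principal ideals (y) and (x^{n-1}+y) satisfy: (y) ∩ (x^{n-1}+y) = 0 and (y) + (x^{n-1}+y) = (x^{n-1}, y). Equivalently, the sequence 0 → R → R/(y) ⊕ R/(x^{n-1}+y) → R/(x^{n-1}, y) → 0, with first map the pair of quotient projections and second map the difference of projections, is exact. -/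
open MvPolynomial

/-!
`W` factors as `y (x^(n-1) + y)`, so `R` is the coordinate ring of a union of two curves. For `f`
and `g` in a ring `A` such that `g` is a nonzerodivisor modulo `f`, one has `(f) ∩ (g) = (f g)`, so
that the images of `(f)` and `(g)` in `A/(f g)` meet in zero. This applies to `f = y` and
`g = x^(n-1) + y`: modulo `y` the latter is `x^(n-1)`, a monomial not involving `y`, and
multiplication by such a monomial only translates the exponents of the other variables.
-/

lemma span_singleton_inf_span_singleton_eq_span_mul {A : Type*} [CommSemiring A] {f g : A}
    (h : ∀ a, f ∣ a * g → f ∣ a) :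
    Ideal.span {f} ⊓ Ideal.span {g} = Ideal.span {f * g} := by
  apply le_antisymm
  · rintro b ⟨hbf, hbg⟩
    obtain ⟨a, rfl⟩ := Ideal.mem_span_singleton'.mp hbg
    have hfa : f ∣ a := h a (Ideal.mem_span_singleton.mp hbf)
    exact Ideal.mem_span_singleton.mpr (mul_dvd_mul_right hfa g)
  · exact le_inf (Ideal.span_singleton_le_span_singleton.mpr (dvd_mul_right f g))
      (Ideal.span_singleton_le_span_singleton.mpr (dvd_mul_left g f))

lemma map_mk_inf_map_mk_eq_bot {A : Type*} [CommRing A] {I J K : Ideal A} (h : J ⊓ K = I) :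
    J.map (Ideal.Quotient.mk I) ⊓ K.map (Ideal.Quotient.mk I) = ⊥ := by
  apply Ideal.comap_injective_of_surjective _ Ideal.Quotient.mk_surjective
  rw [Ideal.comap_inf, Ideal.comap_map_mk (h.ge.trans inf_le_left),
    Ideal.comap_map_mk (h.ge.trans inf_le_right), h, ← RingHom.ker_eq_comap_bot, Ideal.mk_ker]

section CommSemiring

variable {σ k : Type*} [CommSemiring k] {j : σ} {p : MvPolynomial σ k}

lemma X_dvd_iff_forall_mem_support : X j ∣ p ↔ ∀ a ∈ p.support, a j ≠ 0 := by
  rw [← Ideal.mem_span_singleton, ← Set.image_singleton, mem_ideal_span_X_image]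
  simp only [Set.mem_singleton_iff, exists_eq_left]

lemma X_dvd_of_X_dvd_mul_monomial {s : σ →₀ ℕ} (hs : s j = 0) (h : X j ∣ p * monomial s 1) :
    X j ∣ p := by
  rw [X_dvd_iff_forall_mem_support] at h ⊢
  intro a ha
  have has : a + s ∈ (p * monomial s 1).support := by
    simpa only [mem_support_iff, coeff_mul_monomial, mul_one] using ha
  simpa only [Finsupp.add_apply, hs, add_zero] using h (a + s) has

end CommSemiring

section CommRing

variable {σ k : Type*} [CommRing k] {i j : σ}

lemma X_dvd_of_X_dvd_mul_X_pow_add_X (hij : i ≠ j) (m : ℕ) (p : MvPolynomial σ k)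
    (h : X j ∣ p * (X i ^ m + X j)) : X j ∣ p := by
  rw [mul_add, dvd_add_left (dvd_mul_left (X j) p), X_pow_eq_monomial] at h
  exact X_dvd_of_X_dvd_mul_monomial (Finsupp.single_eq_of_ne' hij) h

theorem ideal_intersection_sum_Dn_transpose_general (hij : i ≠ j) (m : ℕ) :
    let W : MvPolynomial σ k := X i ^ m * X j + X j ^ 2
    let R := MvPolynomial σ k ⧸ Ideal.span {W}
    let x : R := Ideal.Quotient.mk _ (X i)
    let y : R := Ideal.Quotient.mk _ (X j)
    Ideal.span {y} ⊓ Ideal.span {x ^ m + y} = ⊥ ∧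
    Ideal.span {y} ⊔ Ideal.span {x ^ m + y} = Ideal.span {x ^ m, y} := by
  intro W R x y
  constructor
  · have hW : X j * (X i ^ m + X j) = W := by ring
    have hinf : Ideal.span {X j} ⊓ Ideal.span {X i ^ m + X j} = Ideal.span {W} :=
      hW ▸ span_singleton_inf_span_singleton_eq_span_mul (X_dvd_of_X_dvd_mul_X_pow_add_X hij m)
    simpa only [Ideal.map_span, Set.image_singleton, map_add, map_pow] using
      map_mk_inf_map_mk_eq_bot hinf
  · rw [← Ideal.span_insert, Ideal.span_pair_add_left, Ideal.span_pair_comm]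

end CommRing

/-- For `n ≥ 2` and `R = ℂ[x,y]/(x^(n-1) y + y²)`, the principal ideals `(y)` and
`(x^(n-1)+y)` of `R` satisfy `(y) ∩ (x^(n-1)+y) = 0` and
`(y) + (x^(n-1)+y) = (x^(n-1), y)`; equivalently the Mayer-Vietoris sequence
`0 → R → R/(y) ⊕ R/(x^(n-1)+y) → R/(x^(n-1), y) → 0` is exact. -/
theorem ideal_intersection_sum_Dn_transpose (n : ℕ) (hn : 2 ≤ n) :
    let W : MvPolynomial (Fin 2) ℂ := X 0 ^ (n - 1) * X 1 + X 1 ^ 2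
    let R := MvPolynomial (Fin 2) ℂ ⧸ Ideal.span {W}
    let x : R := Ideal.Quotient.mk _ (X 0)
    let y : R := Ideal.Quotient.mk _ (X 1)
    Ideal.span {y} ⊓ Ideal.span {x ^ (n - 1) + y} = ⊥ ∧
    Ideal.span {y} ⊔ Ideal.span {x ^ (n - 1) + y} = Ideal.span {x ^ (n - 1), y} :=
  ideal_intersection_sum_Dn_transpose_general Fin.zero_ne_one (n - 1)
end

section
/- Let n ≥ 2, let R = ℂ[x,y]/(x^{n-1}y + y²), and let 1 ≤ i ≤ n-2. Then the colon ideal ((x^{i+1}, y) : x^i) in R equals the maximal ideal (x, y). Equivalently, multiplication by x^i induces a well-defined injective map R/(x,y) → R/(x^{i+1}, y) whose image is the kernel of the natural surjection R/(x^{i+1}, y) → R/(x^i, y), so that 0 → R/(x,y) → R/(x^{i+1}, y) → R/(x^i, y) → 0 is exact. -/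
open MvPolynomial

/-! A power of `x` is a nonzerodivisor modulo `y`, so `x ^ i` can be cancelled from
`x ^ i * r ≡ x ^ i * (x * c)` modulo `y`. Since the relation `W` is a multiple of `y`, membership
in ideals containing `y` can be tested in the polynomial ring itself. -/

lemma mul_mem_span_mul_sup_iff {A : Type*} [CommRing A] {J : Ideal A} {a : A}
    (ha : IsSMulRegular (A ⧸ J) a) (b r : A) :
    a * r ∈ Ideal.span {a * b} ⊔ J ↔ r ∈ Ideal.span {b} ⊔ J := by
  simp only [Ideal.mem_span_singleton_sup]
  constructor
  · rintro ⟨c, j, hj, h⟩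
    have hcancel : a • (r - c * b) ∈ J := by
      rw [smul_eq_mul, show a * (r - c * b) = j by linear_combination -h]
      exact hj
    exact ⟨c, r - c * b, mem_of_isSMulRegular_quotient_of_smul_mem ha hcancel,
      add_sub_cancel _ _⟩
  · rintro ⟨c, j, hj, rfl⟩
    exact ⟨c, a * j, J.mul_mem_left a hj, by ring⟩

lemma isSMulRegular_quotient_span_X_image {σ k : Type*} [CommRing k] {S : Set σ} {s : σ}
    (hs : s ∉ S) :
    IsSMulRegular (MvPolynomial σ k ⧸ Ideal.span (X '' S : Set (MvPolynomial σ k)))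
      (X s : MvPolynomial σ k) := by
  refine (isSMulRegular_quotient_iff_mem_of_smul_mem _ _).mpr fun p hp ↦ ?_
  rw [smul_eq_mul, mem_ideal_span_X_image] at hp
  refine mem_ideal_span_X_image.mpr fun m hm ↦ ?_
  have hXm : Finsupp.single s 1 + m ∈ (X s * p).support := by
    rw [support_X_mul]
    exact Finset.mem_map_of_mem _ hm
  obtain ⟨t, ht, hmt⟩ := hp _ hXm
  have hst : s ≠ t := (ne_of_mem_of_not_mem ht hs).symm
  exact ⟨t, ht, by simpa [hst] using hmt⟩

theorem colon_ideal_powers_Dn_transpose_general {σ k : Type*} [CommRing k] {s t : σ} (hst : s ≠ t)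
    {I : Ideal (MvPolynomial σ k)} (hI : I ≤ Ideal.span {X t}) (i : ℕ) :
    let x : MvPolynomial σ k ⧸ I := Ideal.Quotient.mk I (X s)
    let y : MvPolynomial σ k ⧸ I := Ideal.Quotient.mk I (X t)
    ∀ r, x ^ i * r ∈ Ideal.span {x ^ (i + 1), y} ↔ r ∈ Ideal.span {x, y} := by
  intro x y r
  obtain ⟨p, rfl⟩ := Ideal.Quotient.mk_surjective r
  have mk_mem_span_pair_iff (q f : MvPolynomial σ k) :
      Ideal.Quotient.mk I q ∈ Ideal.span {Ideal.Quotient.mk I f, y} ↔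
        q ∈ Ideal.span {f} ⊔ Ideal.span {X t} := by
    rw [← Ideal.mem_quotient_iff_mem (hI.trans le_sup_right), ← Ideal.span_insert, Ideal.map_span,
      Set.image_pair]
  have hreg : IsSMulRegular (MvPolynomial σ k ⧸ Ideal.span {(X t : MvPolynomial σ k)})
      (X s : MvPolynomial σ k) := by
    rw [← Set.image_singleton]
    exact isSMulRegular_quotient_span_X_image (Set.notMem_singleton_iff.mpr hst)
  rw [← map_pow, ← map_pow, ← map_mul, mk_mem_span_pair_iff, mk_mem_span_pair_iff, pow_succ]
  exact mul_mem_span_mul_sup_iff (hreg.pow i) (X s) p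

/-- For `n ≥ 2`, `R = ℂ[x,y]/(x^(n-1) y + y²)` and `1 ≤ i ≤ n-2`, the colon ideal
`((x^(i+1), y) : x^i)` equals the maximal ideal `(x, y)`: for every `r ∈ R`,
`x^i · r ∈ (x^(i+1), y)` if and only if `r ∈ (x, y)`.  Equivalently, multiplication
by `x^i` induces a well-defined injection `R/(x,y) → R/(x^(i+1), y)` whose image is
the kernel of `R/(x^(i+1), y) → R/(x^i, y)`, so that
`0 → R/(x,y) → R/(x^(i+1), y) → R/(x^i, y) → 0` is exact. -/
theorem colon_ideal_powers_Dn_transpose (n : ℕ) (hn : 2 ≤ n) (i : ℕ)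
    (hi1 : 1 ≤ i) (hi2 : i ≤ n - 2) :
    let W : MvPolynomial (Fin 2) ℂ := X 0 ^ (n - 1) * X 1 + X 1 ^ 2
    let R := MvPolynomial (Fin 2) ℂ ⧸ Ideal.span {W}
    let x : R := Ideal.Quotient.mk _ (X 0)
    let y : R := Ideal.Quotient.mk _ (X 1)
    ∀ r : R, x ^ i * r ∈ Ideal.span {x ^ (i + 1), y} ↔ r ∈ Ideal.span {x, y} := by
  intro W _ _ _
  have hW : X 1 ∣ W := ⟨X 0 ^ (n - 1) + X 1, by ring⟩
  exact colon_ideal_powers_Dn_transpose_general zero_ne_one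
    (Ideal.span_singleton_le_span_singleton.mpr hW) i
end

section
/- Let n ≥ 2 and let R = ℂ[x,y]/(x^{n-1}y + y²). Then the colon ideal ((x, y²) : y) in R equals the maximal ideal (x, y). Equivalently, multiplication by y induces a well-defined injective map R/(x,y) → R/(x, y²) whose image is the kernel of the natural surjection R/(x, y²) → R/(x,y), so that 0 → R/(x,y) → R/(x, y²) → R/(x,y) → 0 is exact. -/
open MvPolynomial

/-!
In the polynomial ring `x, y` is a regular sequence, so `y * r = a * x + b * y ^ 2` gives
`y * (r - b * y) ∈ (x)`, hence `r - b * y ∈ (x)` and `r ∈ (x, y)`. The equality of ideals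
`((x, y ^ 2) : y) = (x, y)` descends to the quotient by any ideal contained in `(x, y ^ 2)`,
in particular by the one generated by `x ^ (n - 1) * y + y ^ 2`.
-/

section CommRing

variable {A : Type*} [CommRing A]

theorem colon_sup_span_singleton_mul {I : Ideal A} {y : A} (hy : IsSMulRegular (A ⧸ I) y) (z : A) :
    (I ⊔ Ideal.span {y * z}).colon {y} = I ⊔ Ideal.span {z} := by
  ext r
  rw [Submodule.mem_colon_singleton, smul_eq_mul, sup_comm I, sup_comm I,
    Ideal.mem_span_singleton_sup, Ideal.mem_span_singleton_sup]
  constructor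
  · rintro ⟨b, c, hc, hbc⟩
    have h_smul : y • (r - b * z) ∈ I := by
      rwa [smul_eq_mul, show y * (r - b * z) = c by linear_combination -hbc]
    exact ⟨b, r - b * z, mem_of_isSMulRegular_quotient_of_smul_mem hy h_smul, by ring⟩
  · rintro ⟨b, c, hc, rfl⟩
    exact ⟨b, y * c, I.mul_mem_left y hc, by ring⟩

theorem map_quotientMk_colon_image {J I : Ideal A} (hJI : J ≤ I) (S : Set A) :
    (I.map (Ideal.Quotient.mk J)).colon (Ideal.Quotient.mk J '' S) =
      (I.colon S).map (Ideal.Quotient.mk J) := by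
  ext r
  obtain ⟨p, rfl⟩ := Ideal.Quotient.mk_surjective r
  simp only [Ideal.mem_quotient_iff_mem (hJI.trans Ideal.le_colon), Submodule.mem_colon,
    Set.forall_mem_image, smul_eq_mul, ← map_mul, Ideal.mem_quotient_iff_mem hJI]

theorem span_pow_mul_add_sq_le_span_pair (x y : A) {m : ℕ} (hm : 0 < m) :
    Ideal.span {x ^ m * y + y ^ 2} ≤ Ideal.span {x, y ^ 2} := by
  refine (Ideal.span_singleton_le_iff_mem _).mpr (Ideal.mem_span_pair.mpr ⟨x ^ (m - 1) * y, 1, ?_⟩)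
  rw [mul_right_comm, pow_sub_one_mul hm.ne', one_mul]

end CommRing

section MvPolynomial

variable {σ k : Type*} [CommRing k]

theorem isSMulRegular_X_quotient_span_X_image {s : Set σ} {j : σ} (hj : j ∉ s) :
    IsSMulRegular (MvPolynomial σ k ⧸ Ideal.span (X '' s : Set (MvPolynomial σ k)))
      (X j : MvPolynomial σ k) := by
  refine (isSMulRegular_quotient_iff_mem_of_smul_mem _ _).mpr fun p hp ↦ ?_
  rw [smul_eq_mul, mem_ideal_span_X_image] at hp
  refine mem_ideal_span_X_image.mpr fun m hm ↦ ?_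
  have h_shift : Finsupp.single j 1 + m ∈ (X j * p).support := by
    rwa [mem_support_iff, coeff_X_mul, ← mem_support_iff]
  obtain ⟨i, his, hi⟩ := hp _ h_shift
  have hji : j ≠ i := fun h ↦ hj (h ▸ his)
  exact ⟨i, his, by simpa [Finsupp.single_apply, hji] using hi⟩

theorem colon_span_X_X_sq {i j : σ} (hij : i ≠ j) :
    (Ideal.span {X i, X j ^ 2} : Ideal (MvPolynomial σ k)).colon {X j} =
      Ideal.span {X i, X j} := by
  have h_reg := isSMulRegular_X_quotient_span_X_image (k := k) (s := {i}) (j := j) hij.symm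
  rw [Set.image_singleton] at h_reg
  rw [Ideal.span_insert, Ideal.span_insert, pow_two, colon_sup_span_singleton_mul h_reg]

theorem colon_ideal_y_Dn_transpose_general {i j : σ} (hij : i ≠ j)
    {J : Ideal (MvPolynomial σ k)} (hJ : J ≤ Ideal.span {X i, X j ^ 2}) :
    let x := Ideal.Quotient.mk J (X i)
    let y := Ideal.Quotient.mk J (X j)
    (Ideal.span {x, y ^ 2}).colon {y} = Ideal.span {x, y} := by
  simpa only [colon_span_X_X_sq hij, Ideal.map_span, Set.image_pair, Set.image_singleton, map_pow]
    using map_quotientMk_colon_image hJ {X j}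

end MvPolynomial

/-- For `n ≥ 2` and `R = ℂ[x,y]/(x^(n-1) y + y²)`, the colon ideal `((x, y²) : y)`
equals the maximal ideal `(x, y)`: for every `r ∈ R`, `y · r ∈ (x, y²)` if and only
if `r ∈ (x, y)`.  Equivalently, multiplication by `y` induces a well-defined
injection `R/(x,y) → R/(x, y²)` whose image is the kernel of the natural surjection
`R/(x, y²) → R/(x,y)`, so that `0 → R/(x,y) → R/(x, y²) → R/(x,y) → 0` is exact. -/
theorem colon_ideal_y_Dn_transpose (n : ℕ) (hn : 2 ≤ n) :
    let W : MvPolynomial (Fin 2) ℂ := X 0 ^ (n - 1) * X 1 + X 1 ^ 2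
    let R := MvPolynomial (Fin 2) ℂ ⧸ Ideal.span {W}
    let x : R := Ideal.Quotient.mk _ (X 0)
    let y : R := Ideal.Quotient.mk _ (X 1)
    ∀ r : R, y * r ∈ Ideal.span {x, y ^ 2} ↔ r ∈ Ideal.span {x, y} := by
  intro W R x y r
  have hW : Ideal.span {W} ≤ Ideal.span {X 0, X 1 ^ 2} :=
    span_pow_mul_add_sq_le_span_pair _ _ (Nat.sub_pos_of_lt hn)
  rw [mul_comm y r, ← colon_ideal_y_Dn_transpose_general zero_ne_one hW,
    Submodule.mem_colon_singleton, smul_eq_mul]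
end

section
/- Let A = (a_{ij}) be an n×n integer matrix invertible over ℚ, and write A^{-1} = (φ_i^{(k)}), with columns φ^{(k)}. For k = 1,…,n set ρ_k = (exp(2π√-1 φ₁^{(k)}), …, exp(2π√-1 φₙ^{(k)})) ∈ (ℂˣ)ⁿ. Then the group G_max = { (α₁,…,αₙ) ∈ (ℂˣ)ⁿ : α₁^{a_{i1}} ⋯ αₙ^{a_{in}} = 1 for all i = 1,…,n } equals the subgroup of (ℂˣ)ⁿ generated by ρ₁, …, ρₙ. In particular each ρ_k lies in G_max and every maximal diagonal symmetry is a product of powers of the ρ_k. -/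
open Matrix BigOperators Real

/-!
A diagonal symmetry `α` satisfies `α_k ^ det A = ∏_i (∏_j α_j ^ a_{ij}) ^ adj(A)_{ki} = 1`, so its
coordinates have finite order and `α = e(v)` for some rational vector `v`, where
`e q = exp(2πiq)` identifies `ℚ / ℤ` with the roots of unity. Applying `A` turns the defining
equations into `A v ∈ ℤⁿ`, that is, `v = A⁻¹ m` with `m` integral: `v` is an integral combination
of the columns of `A⁻¹`.
-/

/-- The group of diagonal symmetries, with coordinates in the commutative group `G`, of the
monomials whose exponent vectors are the rows of `A`. For `G = ℂˣ` and `A` square and invertible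
over `ℚ` this is the group `G_max` of the invertible polynomial associated to `A`. -/
def diagonalSymmetries {ι κ : Type*} [Fintype κ] (A : Matrix ι κ ℤ) (G : Type*) [CommGroup G] :
    Subgroup (κ → G) where
  carrier := {α | ∀ i, ∏ j, α j ^ A i j = 1}
  one_mem' i := by simp only [Pi.one_apply, _root_.one_zpow, Finset.prod_const_one]
  mul_mem' hα hβ i := by
    simp only [Pi.mul_apply, mul_zpow, Finset.prod_mul_distrib, hα i, hβ i, mul_one]
  inv_mem' hα i := by
    simp only [Pi.inv_apply, _root_.inv_zpow, Finset.prod_inv_distrib, hα i, inv_one]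

theorem addChar_map_sum {ι R M : Type*} [AddCommMonoid R] [CommMonoid M] (e : AddChar R M)
    (s : Finset ι) (v : ι → R) : e (∑ i ∈ s, v i) = ∏ i ∈ s, e (v i) :=
  map_sum e.toAddMonoidHom v s

section CommGroup

variable {ι κ R G : Type*} [CommGroup G]

theorem zpow_sum (g : G) (s : Finset ι) (m : ι → ℤ) : g ^ ∑ i ∈ s, m i = ∏ i ∈ s, g ^ m i :=
  Finset.sum_smul (f := m) (x := Additive.ofMul g)

variable [Fintype κ]

theorem mem_diagonalSymmetries {A : Matrix ι κ ℤ} {α : κ → G} :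
    α ∈ diagonalSymmetries A G ↔ ∀ i, ∏ j, α j ^ A i j = 1 :=
  Iff.rfl

theorem zpow_det_eq_one_of_mem_diagonalSymmetries [DecidableEq κ] {A : Matrix κ κ ℤ} {α : κ → G}
    (hα : α ∈ diagonalSymmetries A G) (k : κ) : α k ^ A.det = 1 := by
  have adjugate_mul_apply (j : κ) :
      ∑ i, A i j * A.adjugate k i = if k = j then A.det else 0 := by
    simpa only [mul_apply, Matrix.smul_apply, one_apply, smul_eq_mul, mul_ite, mul_one, mul_zero,
      mul_comm] using congrFun₂ A.adjugate_mul k j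
  calc
    α k ^ A.det = ∏ j, α j ^ ∑ i, A i j * A.adjugate k i := by
      simp only [adjugate_mul_apply, apply_ite, zpow_zero, Finset.prod_ite_eq, Finset.mem_univ,
        if_true]
    _ = ∏ j, ∏ i, (α j ^ A i j) ^ A.adjugate k i := by
      simp only [zpow_sum, _root_.zpow_mul]
    _ = ∏ i, (∏ j, α j ^ A i j) ^ A.adjugate k i := by
      rw [Finset.prod_comm]
      simp only [Finset.prod_zpow]
    _ = 1 := by simp only [mem_diagonalSymmetries.1 hα, _root_.one_zpow, Finset.prod_const_one]

theorem isOfFinOrder_of_mem_diagonalSymmetries [DecidableEq κ] {A : Matrix κ κ ℤ}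
    (hA : A.det ≠ 0) {α : κ → G} (hα : α ∈ diagonalSymmetries A G) (k : κ) :
    IsOfFinOrder (α k) :=
  isOfFinOrder_iff_zpow_eq_one.2 ⟨A.det, hA, zpow_det_eq_one_of_mem_diagonalSymmetries hα k⟩

theorem prod_addChar_zpow [Ring R] (e : AddChar R G) (v : κ → R) (m : κ → ℤ) :
    ∏ j, e (v j) ^ m j = e (∑ j, m j * v j) := by
  simp only [addChar_map_sum, ← e.map_zsmul_eq_zpow, zsmul_eq_mul]

theorem addChar_comp_mem_diagonalSymmetries_iff [Ring R] {e : AddChar R G}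
    (he_ker : ∀ q, e q = 1 ↔ ∃ m : ℤ, (m : R) = q) {A : Matrix ι κ ℤ} {v : κ → R} :
    e ∘ v ∈ diagonalSymmetries A G ↔ ∃ m : ι → ℤ, A.map (↑) *ᵥ v = fun i => (m i : R) := by
  have prod_eq (i : ι) : ∏ j, (e ∘ v) j ^ A i j = e ((A.map (↑) *ᵥ v) i) := by
    simp only [Function.comp_apply, prod_addChar_zpow, mulVec, dotProduct, map_apply]
  simp only [mem_diagonalSymmetries, prod_eq, he_ker, Classical.skolem, funext_iff, eq_comm]

theorem mem_closure_range_addChar_col_iff [Ring R] (e : AddChar R G) (φ : Matrix ι κ R)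
    {α : ι → G} :
    α ∈ Subgroup.closure (Set.range fun k i => e (φ i k)) ↔
      ∃ m : κ → ℤ, α = e ∘ (φ *ᵥ fun k => (m k : R)) := by
  rw [Subgroup.mem_closure_range_iff_of_fintype]
  refine exists_congr fun m => ?_
  simp only [funext_iff, Finset.prod_apply, Pi.pow_apply, prod_addChar_zpow, Function.comp_apply,
    mulVec, dotProduct, (Int.cast_commute _ _).eq]

theorem maximal_diagonal_symmetries_generated_general [CommRing R] [Nontrivial R] [DecidableEq κ]
    {e : AddChar R G} (he_ker : ∀ q, e q = 1 ↔ ∃ m : ℤ, (m : R) = q)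
    (he_torsion : ∀ g : G, IsOfFinOrder g → ∃ q, e q = g)
    {A : Matrix κ κ ℤ} {φ : Matrix κ κ R} (hAφ : A.map (↑) * φ = 1) :
    diagonalSymmetries A G = Subgroup.closure (Set.range fun k i => e (φ i k)) := by
  have hφA : φ * A.map (↑) = 1 := mul_eq_one_comm.1 hAφ
  have hA : A.det ≠ 0 := by
    have : (A.det : R) ≠ 0 := by
      rw [Int.cast_det]
      exact (isUnit_det_of_right_inverse hAφ).ne_zero
    exact ne_of_apply_ne ((↑) : ℤ → R) (by rwa [Int.cast_zero])
  ext α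
  rw [mem_closure_range_addChar_col_iff]
  constructor
  · intro hα
    choose v hv using fun k => he_torsion _ (isOfFinOrder_of_mem_diagonalSymmetries hA hα k)
    obtain rfl : e ∘ v = α := funext hv
    obtain ⟨m, hm⟩ := (addChar_comp_mem_diagonalSymmetries_iff he_ker).1 hα
    exact ⟨m, by rw [← hm, mulVec_mulVec, hφA, one_mulVec]⟩
  · rintro ⟨m, rfl⟩
    exact (addChar_comp_mem_diagonalSymmetries_iff he_ker).2
      ⟨m, by rw [mulVec_mulVec, hAφ, one_mulVec]⟩

end CommGroup

theorem coe_diagonalSymmetries_units {ι κ K : Type*} [Fintype κ] [Field K] (A : Matrix ι κ ℤ) :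
    (diagonalSymmetries A Kˣ : Set (κ → Kˣ)) = {α | ∀ i, ∏ j, (α j : K) ^ A i j = 1} := by
  ext α
  simp only [Set.mem_ofPred_eq, SetLike.mem_coe, mem_diagonalSymmetries, Units.ext_iff,
    Units.coe_prod, Units.val_zpow_eq_zpow_val, Units.val_one]

/-- The additive character `q ↦ exp(2πiq)` of `ℚ`, which identifies `ℚ / ℤ` with the group of
complex roots of unity. -/
noncomputable def rootOfUnityChar : AddChar ℚ ℂˣ :=
  (Circle.toUnits.compAddChar Real.fourierChar).compAddMonoidHom (Rat.castHom ℝ).toAddMonoidHom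

theorem coe_rootOfUnityChar (q : ℚ) :
    (rootOfUnityChar q : ℂ) = Complex.exp (2 * π * Complex.I * q) := by
  simp [rootOfUnityChar, Real.fourierChar_apply, mul_right_comm]

theorem rootOfUnityChar_eq_one_iff (q : ℚ) : rootOfUnityChar q = 1 ↔ ∃ m : ℤ, (m : ℚ) = q := by
  have primitive : IsPrimitiveRoot (rootOfUnityChar q : ℂ) q.den := by
    rw [coe_rootOfUnityChar]
    exact Complex.isPrimitiveRoot_exp_rat q
  rw [← orderOf_eq_one_iff, ← orderOf_units, ← primitive.eq_orderOf, Rat.den_eq_one_iff]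
  exact ⟨fun h => ⟨q.num, h⟩, by rintro ⟨m, rfl⟩; rfl⟩

theorem exists_rootOfUnityChar_eq {ζ : ℂˣ} (hζ : IsOfFinOrder ζ) :
    ∃ q, rootOfUnityChar q = ζ := by
  obtain ⟨n, hn, hζn⟩ := isOfFinOrder_iff_pow_eq_one.1 hζ
  have : NeZero n := ⟨hn.ne'⟩
  obtain ⟨i, -, hi⟩ := (Complex.mem_rootsOfUnity n ζ).1 hζn
  exact ⟨i / n, Units.ext <| by rw [coe_rootOfUnityChar, ← hi]; push_cast; rfl⟩

/-- Let `A = (a_{ij})` be an `n×n` integer matrix invertible over `ℚ`, and write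
`A⁻¹ = (φ_i^{(k)})`.  For `k = 1,…,n` set
`ρ_k = (exp(2π√-1 φ₁^{(k)}), …, exp(2π√-1 φₙ^{(k)})) ∈ (ℂˣ)ⁿ`.  Then the group
`G_max = {(α₁,…,αₙ) ∈ (ℂˣ)ⁿ : ∏_j α_j^{a_{ij}} = 1 for all i}` of maximal diagonal
symmetries equals the subgroup of `(ℂˣ)ⁿ` generated by `ρ₁,…,ρₙ`. -/
theorem maximal_diagonal_symmetries_generated (n : ℕ)
    (A : Matrix (Fin n) (Fin n) ℤ)
    (hA : IsUnit (A.map ((↑) : ℤ → ℚ)).det)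
    (φ : Matrix (Fin n) (Fin n) ℚ)
    (hφ : φ = (A.map ((↑) : ℤ → ℚ))⁻¹)
    (ρ : Fin n → (Fin n → ℂˣ))
    (hρ : ∀ k i, (ρ k i : ℂ) = Complex.exp (2 * π * Complex.I * (φ i k : ℂ))) :
    {α : Fin n → ℂˣ | ∀ i, ∏ j, (α j : ℂ) ^ (A i j) = 1} =
      ↑(Subgroup.closure (Set.range ρ)) := by
  have hρ_char : ρ = fun k i => rootOfUnityChar (φ i k) :=
    funext₂ fun k i => Units.ext <| by rw [hρ, coe_rootOfUnityChar]
  have hAφ : A.map (↑) * φ = 1 := hφ ▸ mul_nonsing_inv _ hA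
  rw [hρ_char, ← coe_diagonalSymmetries_units, maximal_diagonal_symmetries_generated_general
    rootOfUnityChar_eq_one_iff (fun _ => exists_rootOfUnityChar_eq) hAφ]
end
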